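/- Let θ : ℝ → ℝ be smooth and let R ∈ (0,∞). Assume Hypothesis (H_R) holds. Then θ is real analytic on ℝ, and for every integer n ≥ 1 and every x ∈ ℝ one has 𝒟_n^{θ,g_R}(x) ≥ 0. -/

import Mathlib

noncomputable section

/-- `g_R(t) = -(R/π)·log(1 - (π/R)·t)`. -/
def gR (R t : ℝ) : ℝ := -(R / Real.pi) * Real.log (1 - (Real.pi / R) * t)

/-- `f` is a (smooth) solution of `f'' + θ·f = 0`. -/
def IsSolution (θ f : ℝ → ℝ) : Prop :=
  ContDiff ℝ (⊤ : ℕ∞) f ∧ ∀ t, deriv (deriv f) t + θ t * f t = 0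

/-- `f₁, f₂` is the fundamental pair of solutions of `f'' + θ·f = 0` at `x`:
`f₁(x) = f₂'(x) = 1`, `f₂(x) = f₁'(x) = 0`. -/
def IsFundPair (θ : ℝ → ℝ) (x : ℝ) (f₁ f₂ : ℝ → ℝ) : Prop :=
  IsSolution θ f₁ ∧ IsSolution θ f₂ ∧
  f₁ x = 1 ∧ deriv f₁ x = 0 ∧ f₂ x = 0 ∧ deriv f₂ x = 1

/-- The `n`-th `g_R`-Schwarzian `𝒮_n^{θ,g_R}(x)`, computed from the fundamental pair
`f₁, f₂` at `x`: the `n`-th derivative at `t = 0` of `t ↦ h_x(x + g_R(t))`,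
where `h_x = f₂/f₁`. -/
def SchR (R x : ℝ) (f₁ f₂ : ℝ → ℝ) (n : ℕ) : ℝ :=
  iteratedDeriv n (fun t => f₂ (x + gR R t) / f₁ (x + gR R t)) 0

/-- The determinant `𝒟_n^{θ,g_R}(x)` of the `n×n` Hankel matrix with `(i,j)` entry
`𝒮_{i+j-1}^{θ,g_R}(x)/(i+j-1)!`. -/
def DetR (R x : ℝ) (f₁ f₂ : ℝ → ℝ) (n : ℕ) : ℝ :=
  (Matrix.of fun i j : Fin n =>
    SchR R x f₁ f₂ (i.1 + j.1 + 1) / (Nat.factorial (i.1 + j.1 + 1) : ℝ)).det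

/-- Hypothesis (H_R): `f₁, f₂` are linearly independent solutions of `f'' + θ·f = 0`
(constant Wronskian `W = f₁f₂' - f₁'f₂ ≠ 0`) and `h = f₂/f₁` admits a meromorphic
extension `H` to the strip `{|Im z| < R}` (holomorphic off the real zeros of `f₁`,
with poles at those zeros) which satisfies `W·Im H(z)·Im z > 0` for `0 < Im z < R`. -/
def HypR (θ : ℝ → ℝ) (R : ℝ) : Prop :=
  ∃ (f₁ f₂ : ℝ → ℝ) (H : ℂ → ℂ),
    IsSolution θ f₁ ∧ IsSolution θ f₂ ∧
    f₁ 0 * deriv f₂ 0 - deriv f₁ 0 * f₂ 0 ≠ 0 ∧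
    (∀ t : ℝ, f₁ t ≠ 0 → H t = ((f₂ t / f₁ t : ℝ) : ℂ)) ∧
    DifferentiableOn ℂ H
      {z : ℂ | |z.im| < R ∧ ∀ t : ℝ, f₁ t = 0 → z ≠ (t : ℂ)} ∧
    (∀ t : ℝ, f₁ t = 0 →
      Filter.Tendsto (fun z => ‖H z‖) (nhdsWithin (t : ℂ) {(t : ℂ)}ᶜ) Filter.atTop) ∧
    (∀ z : ℂ, 0 < z.im → z.im < R →
      0 < (f₁ 0 * deriv f₂ 0 - deriv f₁ 0 * f₂ 0) * (H z).im * z.im)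

/-- `(i,j)` entry (1-based, clamped to ℕ) of the matrix `T(f,n)(t)`:
`f^{(j-i)}(t)/(j-i)!` if `i ≤ j`, and `0` otherwise. -/
def Tentry (f : ℝ → ℝ) (t : ℝ) (i j : ℕ) : ℝ :=
  if i ≤ j then iteratedDeriv (j - i) f t / (Nat.factorial (j - i) : ℝ) else 0

end

noncomputable section

open MeasureTheory Filter

/-!
Write `g₁, g₂` for the fundamental pair at `x`. The quotient `h_x = g₂ / g₁` is a real Möbius
transform of `h = f₂ / f₁`, with determinant the Wronskian `W`; since `W · Im h > 0` on the upper
half of the strip, `h_x` continues to a Pick function there which is holomorphic at `x`. As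
`g₁ = (h_x')^(-1/2)` near `x`, both `g₁` and `θ = -g₁'' / g₁` are real analytic at `x`.

The function `z ↦ x - (R/π) log (1 - (π/R) z)` maps the upper half-plane into the upper half of the
strip, so `t ↦ h_x (x + g_R t)` continues to a Pick function `F = ∑ aₖ zᵏ` on the upper half-plane
that is holomorphic at `0` and real on the real axis near `0`. By Cauchy's formula and reflection,
`∑ cᵢ cⱼ aᵢ₊ⱼ₊₁` is `1/π` times the imaginary part of the integral of `F(z) p(1/z)² / z²` along a
small upper half-circle, where `p = ∑ cᵢ Xⁱ`. Substituting `u = -1/z` turns it into minus the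
integral of `F(-1/u) p(-u)²` along a large upper half-circle, which deforms onto the real axis
where this integrand has nonnegative imaginary part. Hence the Hankel matrices of `(aₖ₊₁)` are
positive semidefinite.
-/

open Complex Metric
open scoped Topology Real ComplexConjugate

/-- A Pick (Nevanlinna) function on `s`: holomorphic on `s` with values in the closed upper
half-plane. Real constants are included. -/
structure IsPickOn (F : ℂ → ℂ) (s : Set ℂ) : Prop where
  differentiableOn : DifferentiableOn ℂ F s
  im_nonneg : ∀ z ∈ s, 0 ≤ (F z).im

lemma IsPickOn.comp {F g : ℂ → ℂ} {s t : Set ℂ} (hF : IsPickOn F t)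
    (hg : DifferentiableOn ℂ g s) (hst : Set.MapsTo g s t) : IsPickOn (F ∘ g) s :=
  ⟨hF.differentiableOn.comp hg hst, fun z hz ↦ hF.im_nonneg (g z) (hst hz)⟩

/-! ### Hankel positivity of Pick functions -/

section PickHankel

open Polynomial

lemma continuousOn_intervalIntegral {X E : Type*} [TopologicalSpace X]
    [FirstCountableTopology X] [NormedAddCommGroup E] [NormedSpace ℝ E] {f : X → ℝ → E}
    {s : Set X} {a b : ℝ} (hf : ContinuousOn f.uncurry (s ×ˢ Set.uIcc a b)) :
    ContinuousOn (fun x ↦ ∫ t in a..b, f x t) s := by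
  intro x hx
  refine TendstoUniformlyOn.tendsto_intervalIntegral_of_continuousOn ?_ fun u hu ↦ ?_
  · filter_upwards [self_mem_nhdsWithin] with y hy
    exact hf.comp (Continuous.prodMk_right y).continuousOn fun t ht ↦ ⟨hy, ht⟩
  · obtain ⟨v, hv, hvu⟩ := isCompact_uIcc.mem_uniformity_of_prod hf hx (symm_le_uniformity hu)
    filter_upwards [hv] with y hy t ht using hvu y hy t ht

/-- The integral of `f` along the upper half of the circle of radius `r` about `0`,
traversed from `r` to `-r`. -/
def upperArcIntegral (f : ℂ → ℂ) (r : ℝ) : ℂ :=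
  ∫ θ in (0 : ℝ)..π, deriv (circleMap 0 r) θ * f (circleMap 0 r θ)

lemma circleMap_zero_im_nonneg {r θ : ℝ} (hr : 0 ≤ r) (hθ : θ ∈ Set.uIcc 0 π) :
    0 ≤ (circleMap 0 r θ).im := by
  rw [Set.uIcc_of_le Real.pi_nonneg] at hθ
  rw [circleMap_zero_im]
  exact mul_nonneg hr (Real.sin_nonneg_of_nonneg_of_le_pi hθ.1 hθ.2)

lemma continuous_deriv_circleMap (c : ℂ) (r : ℝ) : Continuous (deriv (circleMap c r)) :=
  (contDiff_circleMap c r).continuous_deriv le_top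

/- Holomorphic functions have primitives on discs, so the half-disc is enclosed in a large disc
centred high on the imaginary axis that dips below the real axis by less than `ε`. -/
lemma exists_ball_subset_neg_lt_im {ε : ℝ} (hε : 0 < ε) (M : ℝ) :
    ∃ c ρ, ball c ρ ⊆ {z : ℂ | -ε < z.im} ∧ {z : ℂ | 0 ≤ z.im ∧ ‖z‖ ≤ M} ⊆ ball c ρ := by
  set k : ℝ := M ^ 2 / ε with hk
  have hkε : k * ε = M ^ 2 := by rw [hk]; field_simp
  have hk0 : 0 ≤ k := by positivity
  refine ⟨k * I, k + ε / 2, fun z hz ↦ ?_, fun z ⟨hz, hzM⟩ ↦ ?_⟩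
  · have him := (abs_lt.1 ((abs_im_le_norm _).trans_lt (mem_ball_iff_norm.1 hz))).1
    simp only [sub_im, mul_im, ofReal_re, I_im, mul_one, ofReal_im, I_re, mul_zero,
      add_zero] at him
    change -ε < z.im
    linarith
  · rw [mem_ball_iff_norm]
    apply lt_of_pow_lt_pow_left₀ 2 (by positivity)
    have hsq : ‖z‖ ^ 2 ≤ M ^ 2 := by gcongr
    rw [Complex.sq_norm, normSq_apply] at hsq ⊢
    simp only [sub_re, mul_re, ofReal_re, I_re, mul_zero, ofReal_im, I_im, mul_one, sub_self,
      sub_zero, sub_im, mul_im, add_zero]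
    nlinarith [mul_nonneg hk0 hz]

lemma upperArcIntegral_eq_intervalIntegral {f : ℂ → ℂ} {ε M : ℝ} (hε : 0 < ε) (hM : 0 ≤ M)
    (hf : DifferentiableOn ℂ f {z | -ε < z.im}) :
    upperArcIntegral f M = ∫ x in M..-M, f (x : ℂ) := by
  obtain ⟨c, ρ, hsub, hmem⟩ := exists_ball_subset_neg_lt_im hε M
  obtain ⟨G, hG⟩ := (hf.mono hsub).isExactOn_ball
  have hfc : ContinuousOn f (ball c ρ) := (hf.mono hsub).continuousOn
  have harc : ∀ θ ∈ Set.uIcc 0 π, circleMap 0 M θ ∈ ball c ρ := fun θ hθ ↦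
    hmem ⟨circleMap_zero_im_nonneg hM hθ, by rw [norm_circleMap_zero, abs_of_nonneg hM]⟩
  have hseg : ∀ x ∈ Set.uIcc M (-M), (x : ℂ) ∈ ball c ρ := fun x hx ↦
    hmem ⟨by simp, by
      rw [Set.uIcc_of_ge (by linarith)] at hx
      simpa using abs_le.2 hx⟩
  calc upperArcIntegral f M = G (circleMap 0 M π) - G (circleMap 0 M 0) := by
        refine intervalIntegral.integral_eq_sub_of_hasDerivAt
          (f := fun θ ↦ G (circleMap 0 M θ)) (fun θ hθ ↦ ?_)
          (ContinuousOn.intervalIntegrable ?_)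
        · rw [mul_comm]
          exact (hG _ (harc θ hθ)).comp θ (differentiable_circleMap 0 M θ).hasDerivAt
        · exact (continuous_deriv_circleMap 0 M).continuousOn.mul
            (hfc.comp (continuous_circleMap 0 M).continuousOn harc)
    _ = G ((-M : ℝ) : ℂ) - G (M : ℂ) := by simp [circleMap]
    _ = ∫ x in M..-M, f (x : ℂ) :=
        (intervalIntegral.integral_eq_sub_of_hasDerivAt (f := fun x : ℝ ↦ G (x : ℂ))
          (fun x hx ↦ (hG _ (hseg x hx)).comp_ofReal)
          (hfc.comp continuous_ofReal.continuousOn hseg).intervalIntegrable).symm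

lemma upperArcIntegral_im_nonpos {f : ℂ → ℂ} {ε M : ℝ} (hε : 0 < ε) (hM : 0 ≤ M)
    (hf : DifferentiableOn ℂ f {z | -ε < z.im}) (hreal : ∀ x : ℝ, 0 ≤ (f x).im) :
    (upperArcIntegral f M).im ≤ 0 := by
  have hint : IntervalIntegrable (fun x : ℝ ↦ f x) volume (-M) M :=
    (hf.continuousOn.comp continuous_ofReal.continuousOn fun x _ ↦ by
      simpa using hε).intervalIntegrable
  have him := intervalIntegral.intervalIntegral_im hint
  simp only [RCLike.im_eq_complex_im] at him
  rw [upperArcIntegral_eq_intervalIntegral hε hM hf, intervalIntegral.integral_symm, neg_im,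
    ← him, neg_nonpos]
  exact intervalIntegral.integral_nonneg (by linarith) fun x _ ↦ hreal x

lemma mapsTo_circleMap_add_mul_I {M : ℝ} (hM : 0 ≤ M) :
    Set.MapsTo (fun p : ℝ × ℝ ↦ circleMap 0 M p.2 + p.1 * I)
      (Set.Ici 0 ×ˢ Set.uIcc 0 π) {z | 0 ≤ z.im ∧ M ≤ ‖z‖} := by
  rintro ⟨ε, θ⟩ ⟨hε : 0 ≤ ε, hθ⟩
  have him := circleMap_zero_im_nonneg hM hθ
  refine ⟨by simpa using add_nonneg him hε, le_of_sq_le_sq ?_ (norm_nonneg _)⟩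
  have hnorm : ‖circleMap 0 M θ‖ ^ 2 = M ^ 2 := by rw [norm_circleMap_zero, sq_abs]
  rw [← hnorm, Complex.sq_norm, Complex.sq_norm, normSq_apply, normSq_apply]
  simp only [add_re, mul_re, ofReal_re, I_re, mul_zero, ofReal_im, I_im, mul_one, sub_self,
    add_zero, add_im, mul_im]
  nlinarith [mul_nonneg hε him]

lemma tendsto_upperArcIntegral_translate {f g : ℂ → ℂ} {M : ℝ} (hM : 0 ≤ M)
    (hf : ContinuousOn f {z | 0 ≤ z.im ∧ M ≤ ‖z‖}) (hg : Continuous g) :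
    Tendsto (fun ε : ℝ ↦ upperArcIntegral (fun z ↦ f (z + ε * I) * g z) M) (𝓝[>] 0)
      (𝓝 (upperArcIntegral (fun z ↦ f z * g z) M)) := by
  have hcont : ContinuousOn
      (fun ε : ℝ ↦ upperArcIntegral (fun z ↦ f (z + ε * I) * g z) M) (Set.Ici 0) := by
    refine continuousOn_intervalIntegral (ContinuousOn.mul (f := fun p : ℝ × ℝ ↦
      deriv (circleMap 0 M) p.2) ?_ (ContinuousOn.mul ?_ ?_))
    · exact ((continuous_deriv_circleMap 0 M).comp continuous_snd).continuousOn
    · exact hf.comp (by fun_prop) (mapsTo_circleMap_add_mul_I hM)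
    · exact (hg.comp ((continuous_circleMap 0 M).comp continuous_snd)).continuousOn
  simpa using (hcont 0 Set.self_mem_Ici).mono_left (nhdsWithin_mono 0 Set.Ioi_subset_Ici_self)

lemma aeval_ofReal_sq (p : ℝ[X]) (x : ℝ) : aeval (x : ℂ) p ^ 2 = ((p.eval x ^ 2 : ℝ) : ℂ) := by
  rw [← coe_algebraMap, aeval_algebraMap_apply_eq_algebraMap_eval, coe_algebraMap, ofReal_pow]

/- Only `f (· + ε I)` is holomorphic across the real axis, so the arc is first deformed onto the
real axis for this translate. -/
lemma IsPickOn.upperArcIntegral_mul_aeval_sq_im_nonpos {F : ℂ → ℂ} {M : ℝ}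
    (hF : IsPickOn F {z | 0 < z.im}) (hM : 0 ≤ M)
    (hcont : ContinuousOn F {z | 0 ≤ z.im ∧ M ≤ ‖z‖}) (p : ℝ[X]) :
    (upperArcIntegral (fun z ↦ F z * aeval z p ^ 2) M).im ≤ 0 := by
  refine le_of_tendsto ((continuous_im.tendsto _).comp (tendsto_upperArcIntegral_translate hM hcont
    (p.continuous_aeval.pow 2))) ?_
  filter_upwards [self_mem_nhdsWithin] with ε (hε : 0 < ε)
  refine upperArcIntegral_im_nonpos hε hM (DifferentiableOn.mul ?_ ?_) fun x ↦ ?_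
  · exact hF.differentiableOn.comp (by fun_prop) fun z (hz : -ε < z.im) ↦ by
      simpa [neg_lt_iff_pos_add] using hz
  · exact (p.differentiable_aeval.pow 2).differentiableOn
  · rw [aeval_ofReal_sq, im_mul_ofReal]
    exact mul_nonneg (hF.im_nonneg _ (by simpa using hε)) (sq_nonneg _)

lemma upperArcIntegral_inv_radius (f : ℂ → ℂ) (r : ℝ) :
    upperArcIntegral f r⁻¹ = -upperArcIntegral (fun z ↦ (z ^ 2)⁻¹ * f (-z⁻¹)) r := by
  have harc (θ : ℝ) : circleMap 0 r⁻¹ (π - θ) = -(circleMap 0 r θ)⁻¹ := by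
    rw [circleMap_zero_inv, circleMap_zero, circleMap_zero, ofReal_sub, sub_mul, exp_sub,
      exp_pi_mul_I, ofReal_neg, neg_mul, exp_neg]
    ring
  calc upperArcIntegral f r⁻¹
      = ∫ θ in (0 : ℝ)..π, deriv (circleMap 0 r⁻¹) (π - θ) * f (circleMap 0 r⁻¹ (π - θ)) := by
        rw [intervalIntegral.integral_comp_sub_left
          (fun θ ↦ deriv (circleMap 0 r⁻¹) θ * f (circleMap 0 r⁻¹ θ)), sub_self, sub_zero]
        rfl
    _ = ∫ θ in (0 : ℝ)..π, -(deriv (circleMap 0 r) θ *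
          ((circleMap 0 r θ ^ 2)⁻¹ * f (-(circleMap 0 r θ)⁻¹))) := by
        refine intervalIntegral.integral_congr fun θ _ ↦ ?_
        simp only [deriv_circleMap, harc]
        rcases eq_or_ne (circleMap 0 r θ) 0 with h | h
        · simp [h]
        · field_simp
    _ = _ := intervalIntegral.integral_neg

lemma IsPickOn.upperArcIntegral_mul_aeval_inv_sq_im_nonneg {F : ℂ → ℂ} {r : ℝ}
    (hF : IsPickOn F {z | 0 < z.im}) (hr : 0 < r)
    (hcont : ContinuousOn F (closedBall 0 r)) (p : ℝ[X]) :
    0 ≤ (upperArcIntegral (fun z ↦ (z ^ 2)⁻¹ * (F z * aeval z⁻¹ p ^ 2)) r).im := by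
  have hne {z : ℂ} (hz : 0 < z.im) : z ≠ 0 := by
    rintro rfl
    simp at hz
  have hpick : IsPickOn (F ∘ fun z ↦ -z⁻¹) {z | 0 < z.im} := by
    refine hF.comp (fun z hz ↦ ?_) fun z (hz : 0 < z.im) ↦ ?_
    · exact (differentiableAt_inv (hne hz)).neg.differentiableWithinAt
    · change 0 < (-z⁻¹).im
      rw [neg_im, inv_im, neg_div, neg_neg]
      exact div_pos hz (normSq_pos.2 (hne hz))
  have hcont' : ContinuousOn (F ∘ fun z ↦ -z⁻¹) {z | 0 ≤ z.im ∧ r⁻¹ ≤ ‖z‖} := by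
    have hpos : ∀ z ∈ {z : ℂ | 0 ≤ z.im ∧ r⁻¹ ≤ ‖z‖}, 0 < ‖z‖ := fun z hz ↦
      (inv_pos.2 hr).trans_le hz.2
    refine hcont.comp (continuousOn_inv₀.mono fun z hz ↦ norm_pos_iff.1 (hpos z hz)).neg
      fun z hz ↦ ?_
    rw [mem_closedBall_zero_iff, norm_neg, norm_inv]
    exact inv_le_of_inv_le₀ hr hz.2
  have harc := hpick.upperArcIntegral_mul_aeval_sq_im_nonpos (inv_nonneg.2 hr.le) hcont'
    (p.comp (-X))
  rw [upperArcIntegral_inv_radius, neg_im, neg_nonpos] at harc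
  simpa [aeval_comp] using harc

lemma tendsto_ofReal_nhdsNE (x : ℝ) : Tendsto ((↑) : ℝ → ℂ) (𝓝[≠] x) (𝓝[≠] (x : ℂ)) :=
  continuous_ofReal.continuousWithinAt.tendsto_nhdsWithin fun _ ht ↦
    ofReal_injective.ne ht

lemma apply_conj_of_eventually_im_eq_zero {F : ℂ → ℂ} {r : ℝ} (hr : 0 < r)
    (hF : DifferentiableOn ℂ F (ball 0 r)) (hreal : ∀ᶠ t : ℝ in 𝓝 0, (F t).im = 0)
    {z : ℂ} (hz : z ∈ ball 0 r) : F (conj z) = conj (F z) := by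
  have hG : DifferentiableOn ℂ (fun z ↦ conj (F (conj z))) (ball 0 r) := fun z hz ↦ by
    have hz' : conj z ∈ ball (0 : ℂ) r := by simpa using hz
    have hd := (hF.differentiableAt (isOpen_ball.mem_nhds hz')).conj_conj
    rw [conj_conj] at hd
    exact hd.differentiableWithinAt
  have hfreq : ∃ᶠ z in 𝓝[≠] (0 : ℂ), F z = conj (F (conj z)) := by
    refine (ofReal_zero ▸ tendsto_ofReal_nhdsNE 0).frequently (Eventually.frequently ?_)
    filter_upwards [nhdsWithin_le_nhds hreal] with t (ht : (F t).im = 0)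
    rw [conj_ofReal, conj_eq_iff_im.2 ht]
  have heq := (hF.analyticOnNhd isOpen_ball).eqOn_of_preconnected_of_frequently_eq
    (hG.analyticOnNhd isOpen_ball) (convex_ball _ _).isPreconnected (mem_ball_self hr) hfreq
  rw [heq hz, conj_conj]

lemma intervalIntegrable_deriv_circleMap_mul {f : ℂ → ℂ} {r : ℝ} (hr : 0 ≤ r)
    (hf : ContinuousOn f (sphere 0 r)) (a b : ℝ) :
    IntervalIntegrable (fun θ ↦ deriv (circleMap 0 r) θ * f (circleMap 0 r θ)) volume a b :=
  ((continuous_deriv_circleMap 0 r).mul (hf.comp_continuous (continuous_circleMap 0 r)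
    (circleMap_mem_sphere 0 hr))).intervalIntegrable a b

lemma circleIntegral_eq_upperArcIntegral_im {f : ℂ → ℂ} {r : ℝ} (hr : 0 ≤ r)
    (hf : ContinuousOn f (sphere 0 r)) (hconj : ∀ z ∈ sphere 0 r, f (conj z) = conj (f z)) :
    (∮ z in C(0, r), f z) = 2 * I * (upperArcIntegral f r).im := by
  set g : ℝ → ℂ := fun θ ↦ deriv (circleMap 0 r) θ * f (circleMap 0 r θ) with hg
  have hint := intervalIntegrable_deriv_circleMap_mul hr hf
  have hreflect (θ : ℝ) : g (2 * π - θ) = -conj (g θ) := by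
    simp only [hg, deriv_circleMap, (periodic_circleMap 0 r).sub_eq', ← conj_circleMap_zero,
      hconj _ (circleMap_mem_sphere 0 hr θ), map_mul, conj_I]
    ring
  have hlower : ∫ θ in π..(2 * π), g θ = -conj (upperArcIntegral f r) :=
    calc ∫ θ in π..(2 * π), g θ = ∫ θ in (0 : ℝ)..π, g (2 * π - θ) := by
          rw [intervalIntegral.integral_comp_sub_left, sub_zero, two_mul, add_sub_cancel_right]
      _ = -conj (upperArcIntegral f r) := by
          simp only [hreflect, intervalIntegral.integral_neg]
          rw [upperArcIntegral, intervalIntegral.integral_of_le Real.pi_nonneg,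
            intervalIntegral.integral_of_le Real.pi_nonneg, integral_conj]
  calc (∮ z in C(0, r), f z) = upperArcIntegral f r + ∫ θ in π..(2 * π), g θ :=
        (intervalIntegral.integral_add_adjacent_intervals (hint 0 π) (hint π (2 * π))).symm
    _ = 2 * I * (upperArcIntegral f r).im := by
        rw [hlower, ← sub_eq_add_neg, sub_conj]
        push_cast
        ring

section Moments

variable {F : ℂ → ℂ} {r : ℝ}

lemma continuousOn_sphere_inv_pow_mul (hr : 0 < r) (hF : ContinuousOn F (sphere 0 r)) (m : ℕ) :
    ContinuousOn (fun z ↦ (z ^ m)⁻¹ * F z) (sphere 0 r) :=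
  ((continuousOn_id.pow m).inv₀ fun _ hz ↦ pow_ne_zero m (ne_of_mem_sphere hz hr.ne')).mul hF

lemma upperArcIntegral_inv_pow_mul_im (hr : 0 < r) (hF : DifferentiableOn ℂ F (closedBall 0 r))
    (hconj : ∀ z ∈ closedBall 0 r, F (conj z) = conj (F z)) (m : ℕ) :
    (upperArcIntegral (fun z ↦ (z ^ (m + 1))⁻¹ * F z) r).im
      = π * ((iteratedDeriv m F 0).re / m.factorial) := by
  have hcirc := circleIntegral_eq_upperArcIntegral_im hr.le
    (continuousOn_sphere_inv_pow_mul hr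
      (hF.continuousOn.mono sphere_subset_closedBall) (m + 1)) fun z hz ↦ by
      rw [hconj z (sphere_subset_closedBall hz), map_mul, map_inv₀, map_pow]
  have hcauchy := hF.circleIntegral_one_div_sub_center_pow_smul hr m
  simp only [sub_zero, one_div, smul_eq_mul] at hcauchy
  have hmul : (π : ℂ) * (iteratedDeriv m F 0 / m.factorial)
      = (upperArcIntegral (fun z ↦ (z ^ (m + 1))⁻¹ * F z) r).im := by
    refine mul_left_cancel₀ (mul_ne_zero two_ne_zero I_ne_zero) ?_
    rw [← hcirc, hcauchy]
    ring
  have hre := congrArg re hmul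
  rwa [re_ofReal_mul, div_natCast_re, ofReal_re, eq_comm] at hre

end Moments

/-- The Riesz functional of a sequence `a`: the linear functional on real polynomials sending
`X ^ k` to `a k`. Its values on squares are the quadratic forms of the Hankel matrices of `a`. -/
def rieszFunctional (a : ℕ → ℝ) : ℝ[X] →ₗ[ℝ] ℝ := (basisMonomials ℝ).constr ℝ a

lemma rieszFunctional_monomial (a : ℕ → ℝ) (k : ℕ) (c : ℝ) :
    rieszFunctional a (monomial k c) = c * a k := by
  have h : rieszFunctional a (monomial k 1) = a k := by
    rw [← (basisMonomials ℝ).constr_basis ℝ a k, coe_basisMonomials, rieszFunctional]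
  rw [← mul_one c, ← smul_eq_mul, ← smul_monomial, map_smul, h, smul_eq_mul, smul_eq_mul, mul_one]

lemma posSemidef_hankel_of_rieszFunctional_sq_nonneg {a : ℕ → ℝ}
    (ha : ∀ p : ℝ[X], 0 ≤ rieszFunctional a (p ^ 2)) (n : ℕ) :
    (Matrix.of fun i j : Fin n ↦ a (i + j)).PosSemidef := by
  refine Matrix.PosSemidef.of_dotProduct_mulVec_nonneg ?_ fun c ↦ ?_
  · ext i j
    simp [add_comm]
  · have hsq := ha (∑ i : Fin n, monomial i (c i))
    simp only [sq, Finset.sum_mul_sum, monomial_mul_monomial, map_sum,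
      rieszFunctional_monomial] at hsq
    simpa [dotProduct, Matrix.mulVec, Finset.mul_sum, mul_assoc, mul_comm, mul_left_comm] using hsq

section Hankel

variable {F : ℂ → ℂ} {r : ℝ}

lemma pi_mul_rieszFunctional_eq (hr : 0 < r) (hF : DifferentiableOn ℂ F (closedBall 0 r))
    (hconj : ∀ z ∈ closedBall 0 r, F (conj z) = conj (F z)) (p : ℝ[X]) :
    π * rieszFunctional (fun k ↦ (iteratedDeriv (k + 1) F 0).re / (k + 1).factorial) p
      = (upperArcIntegral (fun z ↦ (z ^ 2)⁻¹ * (F z * aeval z⁻¹ p)) r).im := by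
  induction p using Polynomial.induction_on' with
  | add p q hp hq =>
    have hint (p : ℝ[X]) : IntervalIntegrable (fun θ ↦ deriv (circleMap 0 r) θ *
        ((circleMap 0 r θ ^ 2)⁻¹ * (F (circleMap 0 r θ) * aeval (circleMap 0 r θ)⁻¹ p)))
        volume 0 π :=
      intervalIntegrable_deriv_circleMap_mul hr.le (continuousOn_sphere_inv_pow_mul hr
        ((hF.continuousOn.mono sphere_subset_closedBall).mul (p.continuous_aeval.comp_continuousOn
          (continuousOn_inv₀.mono fun _ hz ↦ ne_of_mem_sphere hz hr.ne'))) 2) 0 π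
    rw [map_add, mul_add, hp, hq, ← add_im, upperArcIntegral, upperArcIntegral, upperArcIntegral,
      ← intervalIntegral.integral_add (hint p) (hint q)]
    simp only [map_add, mul_add]
  | monomial k c =>
    have hint (z : ℂ) : (z ^ 2)⁻¹ * (F z * aeval z⁻¹ (monomial k c))
        = c * ((z ^ (k + 1 + 1))⁻¹ * F z) := by
      rw [aeval_monomial, coe_algebraMap, inv_pow]
      ring
    calc π * rieszFunctional _ (monomial k c)
        = c * (upperArcIntegral (fun z ↦ (z ^ (k + 1 + 1))⁻¹ * F z) r).im := by
          rw [rieszFunctional_monomial, upperArcIntegral_inv_pow_mul_im hr hF hconj]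
          ring
      _ = _ := by
          simp only [hint, upperArcIntegral, mul_left_comm _ (c : ℂ)]
          rw [intervalIntegral.integral_const_mul, im_ofReal_mul]

theorem IsPickOn.posSemidef_hankel (hF : IsPickOn F {z | 0 < z.im}) (hF0 : AnalyticAt ℂ F 0)
    (hreal : ∀ᶠ t : ℝ in 𝓝 0, (F t).im = 0) (n : ℕ) :
    (Matrix.of fun i j : Fin n ↦
      (iteratedDeriv (i + j + 1) F 0).re / ((i + j + 1 : ℕ).factorial : ℝ)).PosSemidef := by
  obtain ⟨r₀, hr₀, hA⟩ := hF0.exists_ball_analyticOnNhd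
  obtain ⟨r, hr, hrr₀⟩ := exists_between hr₀
  have hsub : closedBall (0 : ℂ) r ⊆ ball 0 r₀ := closedBall_subset_ball hrr₀
  have hd : DifferentiableOn ℂ F (closedBall 0 r) := hA.differentiableOn.mono hsub
  refine posSemidef_hankel_of_rieszFunctional_sq_nonneg
    (a := fun k ↦ (iteratedDeriv (k + 1) F 0).re / (k + 1).factorial) (fun p ↦ ?_) n
  refine nonneg_of_mul_nonneg_right ?_ Real.pi_pos
  rw [pi_mul_rieszFunctional_eq hr hd fun z hz ↦
    apply_conj_of_eventually_im_eq_zero hr₀ hA.differentiableOn hreal (hsub hz)]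
  simpa only [map_pow] using
    hF.upperArcIntegral_mul_aeval_inv_sq_im_nonneg hr hd.continuousOn p

end Hankel

end PickHankel

/-! ### Solutions of `f'' + θ·f = 0` -/

/-- The Wronskian of `f` and `g`, with the sign convention of `HypR`; it is constant in `t` for two
solutions of `f'' + θ·f = 0`. -/
def wronskian (f g : ℝ → ℝ) (t : ℝ) : ℝ := f t * deriv g t - deriv f t * g t

section ODE

variable {θ f g : ℝ → ℝ} {x : ℝ}

lemma IsSolution.hasDerivAt (hf : IsSolution θ f) (t : ℝ) : HasDerivAt f (deriv f t) t :=
  (hf.1.differentiable (by simp) t).hasDerivAt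

lemma IsSolution.hasDerivAt_deriv (hf : IsSolution θ f) (t : ℝ) :
    HasDerivAt (deriv f) (-(θ t * f t)) t := by
  have hd := ((contDiff_infty.1 hf.1 2).differentiable_deriv_two t).hasDerivAt
  rwa [eq_neg_of_add_eq_zero_left (hf.2 t)] at hd

lemma IsSolution.wronskian_eq (hf : IsSolution θ f) (hg : IsSolution θ g) (s t : ℝ) :
    wronskian f g s = wronskian f g t := by
  have hd (u : ℝ) : HasDerivAt (wronskian f g) 0 u :=
    (((hf.hasDerivAt u).mul (hg.hasDerivAt_deriv u)).sub
      ((hf.hasDerivAt_deriv u).mul (hg.hasDerivAt u))).congr_deriv (by ring)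
  exact is_const_of_deriv_eq_zero (fun u ↦ (hd u).differentiableAt) (fun u ↦ (hd u).deriv) s t

lemma IsSolution.deriv_linearCombination (hf : IsSolution θ f) (hg : IsSolution θ g) (a b : ℝ) :
    deriv (fun t ↦ a * f t + b * g t) = fun t ↦ a * deriv f t + b * deriv g t :=
  funext fun t ↦ (((hf.hasDerivAt t).const_mul a).add ((hg.hasDerivAt t).const_mul b)).deriv

lemma IsSolution.linearCombination (hf : IsSolution θ f) (hg : IsSolution θ g) (a b : ℝ) :
    IsSolution θ fun t ↦ a * f t + b * g t := by
  refine ⟨(contDiff_const.mul hf.1).add (contDiff_const.mul hg.1), fun t ↦ ?_⟩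
  rw [hf.deriv_linearCombination hg, (((hf.hasDerivAt_deriv t).const_mul a).fun_add
    ((hg.hasDerivAt_deriv t).const_mul b)).deriv]
  ring

lemma exists_isFundPair_of_wronskian_ne_zero (hf : IsSolution θ f) (hg : IsSolution θ g)
    (hW : wronskian f g x ≠ 0) : ∃ g₁ g₂, IsFundPair θ x g₁ g₂ := by
  set W := wronskian f g x with hWdef
  rw [wronskian] at hWdef
  refine ⟨_, _, hf.linearCombination hg (deriv g x / W) (-deriv f x / W),
    hf.linearCombination hg (-g x / W) (f x / W), ?_, ?_, ?_, ?_⟩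
  all_goals
    try rw [hf.deriv_linearCombination hg]
    field_simp
    linarith

lemma IsSolution.eventually_ne_zero (hf : IsSolution θ f) (hW : wronskian f g x ≠ 0) :
    ∀ᶠ t in 𝓝[≠] x, f t ≠ 0 := by
  by_cases hx : f x = 0
  · exact (hf.hasDerivAt x).eventually_ne fun h0 ↦ hW (by simp [wronskian, hx, h0])
  · exact nhdsWithin_le_nhds ((hf.hasDerivAt x).continuousAt.eventually_ne hx)

lemma IsSolution.analyticAt_coefficient (hf : IsSolution θ f) (hfx : AnalyticAt ℝ f x)
    (hx : f x ≠ 0) : AnalyticAt ℝ θ x := by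
  refine (hfx.deriv.deriv.neg.div hfx hx).congr ?_
  filter_upwards [hfx.continuousAt.eventually_ne hx] with t ht
  rw [Pi.div_apply, Pi.neg_apply, eq_neg_of_add_eq_zero_left (hf.2 t), neg_neg,
    mul_div_cancel_right₀ _ ht]

end ODE

section FundPair

variable {θ g₁ g₂ : ℝ → ℝ} {x : ℝ}

lemma IsFundPair.wronskian_eq_one (hg : IsFundPair θ x g₁ g₂) (t : ℝ) :
    wronskian g₁ g₂ t = 1 := by
  obtain ⟨h₁, h₂, h₁x, h₁x', h₂x, h₂x'⟩ := hg
  rw [h₁.wronskian_eq h₂ t x, wronskian, h₁x, h₁x', h₂x, h₂x']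
  norm_num

lemma IsFundPair.eq_linearCombination (hg : IsFundPair θ x g₁ g₂) {f : ℝ → ℝ}
    (hf : IsSolution θ f) (t : ℝ) : f t = f x * g₁ t + deriv f x * g₂ t := by
  have hW := hg.wronskian_eq_one t
  obtain ⟨h₁, h₂, h₁x, h₁x', h₂x, h₂x'⟩ := hg
  have hW₁ := hf.wronskian_eq h₁ t x
  have hW₂ := hf.wronskian_eq h₂ t x
  simp only [wronskian, h₁x, h₁x', h₂x, h₂x'] at hW hW₁ hW₂
  linear_combination g₁ t * hW₂ - g₂ t * hW₁ - f t * hW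

lemma IsFundPair.mobius_div (hg : IsFundPair θ x g₁ g₂) {f₁ f₂ : ℝ → ℝ}
    (hf₁ : IsSolution θ f₁) (hf₂ : IsSolution θ f₂) (hW : wronskian f₁ f₂ x ≠ 0) {t : ℝ}
    (ht : f₁ t ≠ 0) :
    (f₁ x * (f₂ t / f₁ t) - f₂ x) / (deriv f₂ x - deriv f₁ x * (f₂ t / f₁ t)) = g₂ t / g₁ t := by
  have hnum : f₁ x * (f₂ t / f₁ t) - f₂ x = wronskian f₁ f₂ x / f₁ t * g₂ t := by
    field_simp
    rw [hg.eq_linearCombination hf₁ t, hg.eq_linearCombination hf₂ t, wronskian]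
    ring
  have hden : deriv f₂ x - deriv f₁ x * (f₂ t / f₁ t) = wronskian f₁ f₂ x / f₁ t * g₁ t := by
    field_simp
    rw [hg.eq_linearCombination hf₁ t, hg.eq_linearCombination hf₂ t, wronskian]
    ring
  rw [hnum, hden, mul_div_mul_left _ _ (div_ne_zero hW ht)]

lemma IsFundPair.hasDerivAt_div (hg : IsFundPair θ x g₁ g₂) {t : ℝ} (ht : g₁ t ≠ 0) :
    HasDerivAt (fun s ↦ g₂ s / g₁ s) (g₁ t ^ 2)⁻¹ t := by
  have hW := hg.wronskian_eq_one t
  rw [wronskian] at hW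
  refine ((hg.2.1.hasDerivAt t).fun_div (hg.1.hasDerivAt t) ht).congr_deriv ?_
  rw [← one_div, ← hW]
  ring

lemma IsFundPair.continuousAt_div (hg : IsFundPair θ x g₁ g₂) :
    ContinuousAt (fun t ↦ g₂ t / g₁ t) x :=
  (hg.hasDerivAt_div (by simp [hg.2.2.1])).continuousAt

lemma IsFundPair.analyticAt_of_analyticAt_div (hg : IsFundPair θ x g₁ g₂)
    (h : AnalyticAt ℝ (fun t ↦ g₂ t / g₁ t) x) : AnalyticAt ℝ θ x := by
  obtain ⟨h₁, -, h₁x, -⟩ := id hg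
  have hpos : ∀ᶠ t in 𝓝 x, 0 < g₁ t :=
    (h₁.hasDerivAt x).continuousAt.eventually_const_lt (by simp [h₁x])
  have hderiv : ∀ᶠ t in 𝓝 x, deriv (fun s ↦ g₂ s / g₁ s) t = (g₁ t ^ 2)⁻¹ :=
    hpos.mono fun t ht ↦ (hg.hasDerivAt_div ht.ne').deriv
  have hsqrt : AnalyticAt ℝ (fun t ↦ √(deriv (fun s ↦ g₂ s / g₁ s) t)⁻¹) x := by
    refine (ContDiffAt.sqrt (h.deriv.inv ?_).contDiffAt ?_).analyticAt
    all_goals simp [hderiv.self_of_nhds, h₁x]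
  refine h₁.analyticAt_coefficient (hsqrt.congr ?_) (by simp [h₁x])
  filter_upwards [hpos, hderiv] with t ht htderiv
  rw [htderiv, inv_inv, Real.sqrt_sq ht.le]

end FundPair

/-! ### Continuation of `g₂ / g₁` to the strip -/

lemma IsPickOn.congr {F G : ℂ → ℂ} {s : Set ℂ} (hF : IsPickOn F s) (h : Set.EqOn G F s) :
    IsPickOn G s :=
  ⟨hF.differentiableOn.congr h, fun z hz ↦ h hz ▸ hF.im_nonneg z hz⟩

lemma mobius_im (a b c d : ℝ) (w : ℂ) :
    ((a * w - b) / (d - c * w)).im = (a * d - b * c) * w.im / normSq (d - c * w) := by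
  simp only [div_im, sub_im, sub_re, im_ofReal_mul, re_ofReal_mul, ofReal_im, ofReal_re]
  ring

lemma isPickOn_mobius {H : ℂ → ℂ} {s : Set ℂ} {a b c d : ℝ} (hH : DifferentiableOn ℂ H s)
    (him : ∀ z ∈ s, 0 < (a * d - b * c) * (H z).im) :
    IsPickOn (fun z ↦ (a * H z - b) / (d - c * H z)) s := by
  refine ⟨((hH.const_mul _).sub_const _).div ((hH.const_mul _).const_sub _) fun z hz hden ↦ ?_,
    fun z hz ↦ ?_⟩
  · have hc : c * (H z).im = 0 := by simpa using congrArg im hden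
    have hd : d = c * (H z).re := sub_eq_zero.1 (by simpa using congrArg re hden)
    refine (him z hz).ne' ?_
    rw [hd]
    linear_combination (a * (H z).re - b) * hc
  · rw [mobius_im]
    exact div_nonneg (him z hz).le (normSq_nonneg _)

lemma meromorphicAt_of_tendsto_norm_atTop {f : ℂ → ℂ} {x : ℂ}
    (hd : ∀ᶠ z in 𝓝[≠] x, DifferentiableAt ℂ f z)
    (hf : Tendsto (fun z ↦ ‖f z‖) (𝓝[≠] x) atTop) : MeromorphicAt f x := by
  have hlim : Tendsto f⁻¹ (𝓝[≠] x) (𝓝 0) :=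
    tendsto_inv₀_cobounded.comp (tendsto_norm_atTop_iff_cobounded.1 hf)
  have hinv : AnalyticAt ℂ (Function.update f⁻¹ x 0) x := by
    refine analyticAt_of_differentiable_on_punctured_nhds_of_continuousAt ?_
      (continuousAt_update_same.2 hlim)
    filter_upwards [hd, hf.eventually_gt_atTop 0, self_mem_nhdsWithin] with z hz hz0 hzx
    exact (hz.inv (norm_pos_iff.1 hz0)).congr_of_eventuallyEq
      ((eventually_ne_nhds hzx).mono fun w hw ↦ Function.update_of_ne hw _ _)
  have hmer := (hinv.meromorphicAt.congr (Function.update_eventuallyEq_nhdsNE _ _ _ _)).inv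
  rwa [inv_inv] at hmer

section RealRestriction

variable {M : ℂ → ℂ} {φ : ℝ → ℝ} {x : ℝ}

lemma analyticAt_toMeromorphicNFAt_of_ofReal (hM : MeromorphicAt M x) (hφ : ContinuousAt φ x)
    (h : ∀ᶠ t : ℝ in 𝓝[≠] x, M t = φ t) : AnalyticAt ℂ (toMeromorphicNFAt M x) x := by
  rw [← hM.meromorphicOrderAt_nonneg_iff_analyticAt_toMeromorphicNFAt]
  by_contra! hneg
  have hlim : Tendsto (fun t : ℝ ↦ M t) (𝓝[≠] x) (𝓝 (φ x : ℂ)) :=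
    ((continuous_ofReal.continuousAt.comp hφ).tendsto.mono_left nhdsWithin_le_nhds).congr'
      (h.mono fun t ht ↦ ht.symm)
  exact hlim.not_tendsto (disjoint_nhds_cobounded _)
    ((tendsto_cobounded_of_meromorphicOrderAt_neg hneg).comp (tendsto_ofReal_nhdsNE x))

lemma toMeromorphicNFAt_ofReal_eventuallyEq (hM : MeromorphicAt M x) (hφ : ContinuousAt φ x)
    (h : ∀ᶠ t : ℝ in 𝓝[≠] x, M t = φ t) : ∀ᶠ t : ℝ in 𝓝 x, toMeromorphicNFAt M x t = φ t := by
  have hN := (analyticAt_toMeromorphicNFAt_of_ofReal hM hφ h).continuousAt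
  refine (ContinuousAt.eventuallyEq_nhds_iff_eventuallyEq_nhdsNE
    (hN.comp continuous_ofReal.continuousAt) (continuous_ofReal.continuousAt.comp hφ)).1 ?_
  filter_upwards [h, (tendsto_ofReal_nhdsNE x).eventually hM.eq_nhdsNE_toMeromorphicNFAt]
    with t ht hNt
  exact hNt.symm.trans ht

end RealRestriction

/-- The strip `|Im z| < R` with the real zeros of `f` removed, on which `HypR` requires the
extension of a quotient with denominator `f` to be holomorphic. -/
def poleFreeStrip (f : ℝ → ℝ) (R : ℝ) : Set ℂ :=
  {z | |z.im| < R ∧ ∀ t : ℝ, f t = 0 → z ≠ t}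

section PoleFreeStrip

variable {f : ℝ → ℝ} {R : ℝ}

lemma isOpen_poleFreeStrip (hf : Continuous f) : IsOpen (poleFreeStrip f R) := by
  have hzeros : IsClosed ((↑) '' {t : ℝ | f t = 0} : Set ℂ) :=
    isometry_ofReal.isClosedEmbedding.isClosedMap _ (isClosed_eq hf continuous_const)
  have hstrip : IsOpen {z : ℂ | |z.im| < R} := isOpen_lt continuous_im.abs continuous_const
  convert hstrip.inter hzeros.isOpen_compl using 1
  ext z
  simp [poleFreeStrip, eq_comm]

lemma upperStrip_subset_poleFreeStrip : {z : ℂ | 0 < z.im ∧ z.im < R} ⊆ poleFreeStrip f R := by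
  rintro z ⟨hz, hzR⟩
  refine ⟨by rwa [abs_of_pos hz], ?_⟩
  rintro t - rfl
  simp at hz

lemma eventually_mem_poleFreeStrip {x : ℝ} (hR : 0 < R) (hf : ∀ᶠ t in 𝓝[≠] x, f t ≠ 0) :
    ∀ᶠ z : ℂ in 𝓝[≠] ↑x, z ∈ poleFreeStrip f R := by
  rw [eventually_nhdsWithin_iff] at hf ⊢
  filter_upwards [(continuous_re.tendsto (x : ℂ)).eventually hf,
    continuous_im.abs.continuousAt.eventually_lt_const (by simpa using hR)] with z hzf hzR hzx
  refine ⟨hzR, ?_⟩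
  rintro t ht rfl
  exact hzf (fun htx ↦ hzx (congrArg _ htx)) ht

lemma meromorphicAt_of_differentiableOn_poleFreeStrip {H : ℂ → ℂ} {x : ℝ} (hR : 0 < R)
    (hfc : Continuous f) (hf : ∀ᶠ t in 𝓝[≠] x, f t ≠ 0)
    (hH : DifferentiableOn ℂ H (poleFreeStrip f R))
    (hpole : f x = 0 → Tendsto (fun z ↦ ‖H z‖) (𝓝[≠] (x : ℂ)) atTop) : MeromorphicAt H x := by
  have hopen : IsOpen (poleFreeStrip f R) := isOpen_poleFreeStrip hfc
  by_cases hx : f x = 0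
  · exact meromorphicAt_of_tendsto_norm_atTop ((eventually_mem_poleFreeStrip hR hf).mono
      fun z hz ↦ hH.differentiableAt (hopen.mem_nhds hz)) (hpole hx)
  · have hmem : (x : ℂ) ∈ poleFreeStrip f R :=
      ⟨by simpa using hR, fun t ht htx ↦ hx (ofReal_injective htx ▸ ht)⟩
    exact (hH.analyticAt (hopen.mem_nhds hmem)).meromorphicAt

end PoleFreeStrip

section Extension

variable {θ : ℝ → ℝ} {R x : ℝ} {g₁ g₂ : ℝ → ℝ}

lemma HypR.exists_isFundPair (h : HypR θ R) (x : ℝ) : ∃ g₁ g₂, IsFundPair θ x g₁ g₂ := by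
  obtain ⟨f₁, f₂, -, hf₁, hf₂, hW, -⟩ := h
  exact exists_isFundPair_of_wronskian_ne_zero hf₁ hf₂ (hf₁.wronskian_eq hf₂ 0 x ▸ hW)

lemma HypR.exists_isPickOn_extension (hR : 0 < R) (h : HypR θ R) (hg : IsFundPair θ x g₁ g₂) :
    ∃ F : ℂ → ℂ, AnalyticAt ℂ F x ∧ IsPickOn F {z | 0 < z.im ∧ z.im < R} ∧
      ∀ᶠ t : ℝ in 𝓝 x, F t = ((g₂ t / g₁ t : ℝ) : ℂ) := by
  obtain ⟨f₁, f₂, H, hf₁, hf₂, hW₀, hHreal, hHd, hpole, hHim⟩ := h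
  have hWx : wronskian f₁ f₂ 0 = wronskian f₁ f₂ x := hf₁.wronskian_eq hf₂ 0 x
  have hW : wronskian f₁ f₂ x ≠ 0 := hWx ▸ hW₀
  have hf₁ne : ∀ᶠ t in 𝓝[≠] x, f₁ t ≠ 0 := hf₁.eventually_ne_zero hW
  have hHmer : MeromorphicAt H x := meromorphicAt_of_differentiableOn_poleFreeStrip hR
    hf₁.1.continuous hf₁ne hHd (hpole x)
  set M : ℂ → ℂ := fun z ↦ (f₁ x * H z - f₂ x) / (deriv f₂ x - deriv f₁ x * H z) with hM
  have hMmer : MeromorphicAt M x := by fun_prop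
  have hMreal : ∀ᶠ t : ℝ in 𝓝[≠] x, M t = ((g₂ t / g₁ t : ℝ) : ℂ) := by
    filter_upwards [hf₁ne] with t ht
    rw [← hg.mobius_div hf₁ hf₂ hW ht, hM]
    simp only [hHreal t ht]
    push_cast
    rfl
  have hMpick : IsPickOn M {z | 0 < z.im ∧ z.im < R} := by
    refine isPickOn_mobius (hHd.mono upperStrip_subset_poleFreeStrip) fun z hz ↦ ?_
    rw [mul_comm (f₂ x), ← wronskian, ← hWx]
    exact pos_of_mul_pos_left (hHim z hz.1 hz.2) hz.1.le
  refine ⟨toMeromorphicNFAt M x,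
    analyticAt_toMeromorphicNFAt_of_ofReal hMmer hg.continuousAt_div hMreal,
    hMpick.congr fun z hz ↦ ?_,
    toMeromorphicNFAt_ofReal_eventuallyEq hMmer hg.continuousAt_div hMreal⟩
  refine (hMmer.eqOn_compl_singleton_toMeromorphicNFAt ?_).symm
  rintro rfl
  simp at hz

end Extension

/-! ### Pullback to the upper half-plane -/

/-- The holomorphic continuation of `gR R`, mapping the upper half-plane into the strip
`0 < Im z < R`. -/
def stripMap (R : ℝ) (z : ℂ) : ℂ := -((R / π : ℝ) : ℂ) * log (1 - ((π / R : ℝ) : ℂ) * z)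

section StripMap

variable {R : ℝ}

lemma stripMap_ofReal_eventuallyEq (R : ℝ) : ∀ᶠ t : ℝ in 𝓝 0, stripMap R t = gR R t := by
  have hcont : ContinuousAt (fun t : ℝ ↦ 1 - π / R * t) 0 := by fun_prop
  filter_upwards [hcont.eventually_const_lt (u := 0) (by simp)] with t ht
  rw [stripMap, gR]
  push_cast [ofReal_log ht.le]
  rfl

lemma stripMap_zero (R : ℝ) : stripMap R 0 = 0 := by simp [stripMap]

lemma analyticAt_stripMap_zero (R : ℝ) : AnalyticAt ℂ (stripMap R) 0 :=
  analyticAt_const.mul ((analyticAt_const.sub (analyticAt_const.mul analyticAt_id)).clog (by simp))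

lemma one_sub_mul_im_neg (hR : 0 < R) {z : ℂ} (hz : 0 < z.im) :
    (1 - ((π / R : ℝ) : ℂ) * z).im < 0 := by
  rw [sub_im, one_im, im_ofReal_mul, zero_sub, neg_lt_zero]
  have := Real.pi_pos
  positivity

lemma differentiableOn_stripMap (hR : 0 < R) :
    DifferentiableOn ℂ (stripMap R) {z | 0 < z.im} := fun _ hz ↦
  (((differentiableAt_id.const_mul _).const_sub 1).clog
    (Or.inr (one_sub_mul_im_neg hR hz).ne)).const_mul _ |>.differentiableWithinAt

lemma mapsTo_stripMap (hR : 0 < R) :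
    Set.MapsTo (stripMap R) {z | 0 < z.im} {z | 0 < z.im ∧ z.im < R} := by
  intro z hz
  set w : ℂ := 1 - ((π / R : ℝ) : ℂ) * z with hw
  have him : (stripMap R z).im = R / π * -arg w := by
    rw [stripMap, ← ofReal_neg, im_ofReal_mul, log_im, ← hw]
    ring
  have hneg : 0 < -arg w := neg_pos.2 (arg_neg_iff.2 (one_sub_mul_im_neg hR hz))
  have hpi : -arg w < π := neg_lt.1 (neg_pi_lt_arg w)
  have hRpi : 0 < R / π := div_pos hR Real.pi_pos
  refine ⟨him ▸ mul_pos hRpi hneg, ?_⟩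
  calc (stripMap R z).im = R / π * -arg w := him
    _ < R / π * π := mul_lt_mul_of_pos_left hpi hRpi
    _ = R := div_mul_cancel₀ R Real.pi_ne_zero

end StripMap

lemma iteratedDeriv_re_comp_ofReal {F : ℂ → ℂ} {x : ℝ} (hF : AnalyticAt ℂ F x) (n : ℕ) :
    iteratedDeriv n (fun t : ℝ ↦ (F t).re) x = (iteratedDeriv n F x).re := by
  induction n generalizing F with
  | zero => simp
  | succ n ih =>
    have hderiv : deriv (fun t : ℝ ↦ (F t).re) =ᶠ[𝓝 x] fun t : ℝ ↦ (deriv F t).re := by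
      filter_upwards [continuous_ofReal.continuousAt.eventually hF.eventually_analyticAt] with t ht
      exact ht.differentiableAt.hasDerivAt.real_of_complex.deriv
    rw [iteratedDeriv_succ', iteratedDeriv_succ', hderiv.iteratedDeriv_eq, ih hF.deriv]

lemma tendsto_gR_zero (R : ℝ) : Tendsto (gR R) (𝓝 0) (𝓝 0) := by
  have hcont : ContinuousAt (gR R) 0 :=
    continuousAt_const.mul (ContinuousAt.log (by fun_prop) (by simp))
  simpa [ContinuousAt, gR] using hcont

section Pullback

variable {θ : ℝ → ℝ} {R x : ℝ} {f₁ f₂ : ℝ → ℝ}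

lemma HypR.exists_isPickOn_pullback (hR : 0 < R) (h : HypR θ R) (hf : IsFundPair θ x f₁ f₂) :
    ∃ F : ℂ → ℂ, IsPickOn F {z | 0 < z.im} ∧ AnalyticAt ℂ F 0 ∧
      ∀ᶠ t : ℝ in 𝓝 0, F t = ((f₂ (x + gR R t) / f₁ (x + gR R t) : ℝ) : ℂ) := by
  obtain ⟨F, hFx, hFpick, hFreal⟩ := h.exists_isPickOn_extension hR hf
  refine ⟨F ∘ fun z ↦ x + stripMap R z,
    hFpick.comp ((differentiableOn_stripMap hR).const_add _) fun z hz ↦ ?_, ?_, ?_⟩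
  · simpa using mapsTo_stripMap hR hz
  · refine AnalyticAt.comp ?_ (analyticAt_const.add (analyticAt_stripMap_zero R))
    simpa [stripMap_zero] using hFx
  · have hlim : Tendsto (fun t ↦ x + gR R t) (𝓝 0) (𝓝 x) := by
      simpa using (tendsto_gR_zero R).const_add x
    filter_upwards [hlim.eventually hFreal, stripMap_ofReal_eventuallyEq R] with t ht hgt
    rw [Function.comp_apply, hgt, ← ofReal_add, ht]

lemma SchR_eq_iteratedDeriv_re {F : ℂ → ℂ} (hF : AnalyticAt ℂ F 0)
    (hreal : ∀ᶠ t : ℝ in 𝓝 0, F t = ((f₂ (x + gR R t) / f₁ (x + gR R t) : ℝ) : ℂ)) (n : ℕ) :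
    SchR R x f₁ f₂ n = (iteratedDeriv n F 0).re := by
  rw [← ofReal_zero] at hF ⊢
  rw [← iteratedDeriv_re_comp_ofReal hF, SchR]
  refine EventuallyEq.iteratedDeriv_eq n (hreal.mono fun t ht ↦ ?_)
  simp only [ht, ofReal_re]

end Pullback

/-- If θ is smooth, `0 < R`, and Hypothesis (H_R) holds, then θ is real
analytic on ℝ and `𝒟_n^{θ,g_R}(x) ≥ 0` for every `n ≥ 1` and every `x`. -/
theorem stmt0 (θ : ℝ → ℝ) (hθ : ContDiff ℝ (⊤ : ℕ∞) θ) (R : ℝ) (hR : 0 < R)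
    (hHyp : HypR θ R) :
    (∀ x : ℝ, AnalyticAt ℝ θ x) ∧
    (∀ (x : ℝ) (f₁ f₂ : ℝ → ℝ), IsFundPair θ x f₁ f₂ →
      ∀ n : ℕ, 1 ≤ n → 0 ≤ DetR R x f₁ f₂ n) := by
  refine ⟨fun x ↦ ?_, fun x f₁ f₂ hf n _ ↦ ?_⟩
  · obtain ⟨g₁, g₂, hg⟩ := hHyp.exists_isFundPair x
    obtain ⟨F, hFx, -, hFreal⟩ := hHyp.exists_isPickOn_extension hR hg
    refine hg.analyticAt_of_analyticAt_div
      (hFx.re_ofReal.congr (hFreal.mono fun t ht ↦ by simp only [ht, ofReal_re]))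
  · obtain ⟨F, hFpick, hF0, hFreal⟩ := hHyp.exists_isPickOn_pullback hR hf
    have hdet := (hFpick.posSemidef_hankel hF0
      (hFreal.mono fun t ht ↦ by rw [ht, ofReal_im]) n).det_nonneg
    simpa only [DetR, SchR_eq_iteratedDeriv_re hF0 hFreal] using hdet

end
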